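/- (Baccari–Trad) Let x* be a local minimizer of (NLP). Assume MFCQ holds at x* and that Λ(x*) is a line segment, i.e. there exist (λ⁰,μ⁰), (λ¹,μ¹) such that Λ(x*) = {(1−t)(λ⁰,μ⁰) + t(λ¹,μ¹) : t ∈ [0,1]}. Then for every first-order cone K contained in the critical cone C(x*) there exists a Lagrange multiplier (λᴷ,μᴷ) ∈ Λ(x*) such that dᵀ∇²ₓₓL(x*,λᴷ,μᴷ)d ≥ 0 for all d ∈ K. -/

import Mathlib

open scoped BigOperators Pointwise
open Matrix

attribute [local instance] Classical.propDecidable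

noncomputable section

/-- The gradient vector of `φ` at `x` (the vector of partial derivatives). -/
def gradVec {n : ℕ} (φ : (Fin n → ℝ) → ℝ) (x : Fin n → ℝ) : Fin n → ℝ :=
  fun k => fderiv ℝ φ x (Pi.single k 1)

/-- The quadratic form `d ↦ dᵀ ∇²φ(x) d` of the Hessian of `φ` at `x`. -/
def hessQ {n : ℕ} (φ : (Fin n → ℝ) → ℝ) (x d : Fin n → ℝ) : ℝ :=
  iteratedFDeriv ℝ 2 φ x ![d, d]

/-- Feasibility for the problem (NLP). -/
def Feas {n m p : ℕ} (h : Fin m → (Fin n → ℝ) → ℝ) (g : Fin p → (Fin n → ℝ) → ℝ)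
    (x : Fin n → ℝ) : Prop :=
  (∀ i, h i x = 0) ∧ ∀ j, g j x ≤ 0

/-- The Lagrangian of (NLP). -/
def Lagr {n m p : ℕ} (f : (Fin n → ℝ) → ℝ) (h : Fin m → (Fin n → ℝ) → ℝ)
    (g : Fin p → (Fin n → ℝ) → ℝ) (lam : Fin m → ℝ) (mu : Fin p → ℝ) (x : Fin n → ℝ) : ℝ :=
  f x + ∑ i, lam i * h i x + ∑ j, mu j * g j x

/-- `(lam, mu)` is a Lagrange multiplier at `xs`, i.e. `(lam, mu) ∈ Λ(xs)`. -/
def IsLagMult {n m p : ℕ} (f : (Fin n → ℝ) → ℝ) (h : Fin m → (Fin n → ℝ) → ℝ)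
    (g : Fin p → (Fin n → ℝ) → ℝ) (xs : Fin n → ℝ) (lam : Fin m → ℝ) (mu : Fin p → ℝ) : Prop :=
  (∀ j, 0 ≤ mu j) ∧ fderiv ℝ (Lagr f h g lam mu) xs = 0 ∧ ∀ j, mu j * g j xs = 0

/-- The Mangasarian-Fromovitz constraint qualification at `xs`. -/
def MFCQ {n m p : ℕ} (h : Fin m → (Fin n → ℝ) → ℝ) (g : Fin p → (Fin n → ℝ) → ℝ)
    (xs : Fin n → ℝ) : Prop :=
  LinearIndependent ℝ (fun i : Fin m => fderiv ℝ (h i) xs) ∧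
  ∃ d : Fin n → ℝ, (∀ i, fderiv ℝ (h i) xs d = 0) ∧
    ∀ j, g j xs = 0 → fderiv ℝ (g j) xs d < 0

/-- Membership in the critical cone `C(xs)`. -/
def critCone {n m p : ℕ} (f : (Fin n → ℝ) → ℝ) (h : Fin m → (Fin n → ℝ) → ℝ)
    (g : Fin p → (Fin n → ℝ) → ℝ) (xs d : Fin n → ℝ) : Prop :=
  fderiv ℝ f xs d = 0 ∧ (∀ i, fderiv ℝ (h i) xs d = 0) ∧
    ∀ j, g j xs = 0 → fderiv ℝ (g j) xs d ≤ 0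

/-- Membership in the critical subspace `S(xs)`. -/
def critSub {n m p : ℕ} (h : Fin m → (Fin n → ℝ) → ℝ) (g : Fin p → (Fin n → ℝ) → ℝ)
    (xs d : Fin n → ℝ) : Prop :=
  (∀ i, fderiv ℝ (h i) xs d = 0) ∧ ∀ j, g j xs = 0 → fderiv ℝ (g j) xs d = 0

/-- The Jacobian matrix `J(x)` of equality and active inequality constraints
(activity taken at the base point `xs`). -/
def Jac {n m p : ℕ} (h : Fin m → (Fin n → ℝ) → ℝ) (g : Fin p → (Fin n → ℝ) → ℝ)
    (xs x : Fin n → ℝ) : Matrix (Fin m ⊕ {j : Fin p // g j xs = 0}) (Fin n) ℝ :=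
  Matrix.of fun i k =>
    Sum.elim (fun i' => fderiv ℝ (h i') x (Pi.single k 1))
      (fun j' => fderiv ℝ (g j'.1) x (Pi.single k 1)) i

/-- A first-order cone: the (direct) sum of a linear subspace and a ray. -/
def IsFirstOrderCone {n : ℕ} (K : Set (Fin n → ℝ)) : Prop :=
  ∃ (W : Submodule ℝ (Fin n → ℝ)) (d0 : Fin n → ℝ),
    K = {x | ∃ w ∈ W, ∃ r : ℝ, 0 ≤ r ∧ x = w + r • d0}

/-- The rank of a family of vectors: the dimension of its linear span. -/
def famRank {ι : Type*} {n : ℕ} (v : ι → (Fin n → ℝ)) : ℕ :=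
  Module.finrank ℝ (Submodule.span ℝ (Set.range v))

section Helpers
open Filter Topology Asymptotics

theorem aux_yuan {E : Type*} [NormedAddCommGroup E] [NormedSpace ℝ E] (V : Submodule ℝ E)
    (A B : E →L[ℝ] E →L[ℝ] ℝ) (H : ∀ x ∈ V, 0 ≤ A x x ∨ 0 ≤ B x x) :
    ∃ t ∈ Set.Icc (0:ℝ) 1, ∀ x ∈ V, 0 ≤ (1 - t) * A x x + t * B x x := by
  by_contra hcon
  push Not at hcon
  have hU : IsOpen {t : ℝ | ∃ x ∈ V, (1 - t) * A x x + t * B x x < 0 ∧ A x x < 0} := by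
    have : {t : ℝ | ∃ x ∈ V, (1 - t) * A x x + t * B x x < 0 ∧ A x x < 0}
      = ⋃ x ∈ {x | x ∈ V ∧ A x x < 0}, {t : ℝ | (1 - t) * A x x + t * B x x < 0} := by
      ext t; simp; grind
    rw [this]
    exact isOpen_biUnion fun x _ => isOpen_lt (by fun_prop) continuous_const
  have hW : IsOpen {t : ℝ | ∃ x ∈ V, (1 - t) * A x x + t * B x x < 0 ∧ B x x < 0} := by
    have : {t : ℝ | ∃ x ∈ V, (1 - t) * A x x + t * B x x < 0 ∧ B x x < 0}
      = ⋃ x ∈ {x | x ∈ V ∧ B x x < 0}, {t : ℝ | (1 - t) * A x x + t * B x x < 0} := by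
      ext t; simp; grind
    rw [this]
    exact isOpen_biUnion fun x _ => isOpen_lt (by fun_prop) continuous_const
  have key : ∀ t ∈ Set.Icc (0:ℝ) 1, ∀ x, (1 - t) * A x x + t * B x x < 0 →
      A x x < 0 ∨ B x x < 0 := by
    intro t ht x hx
    by_contra h
    push Not at h
    have h1 := mul_nonneg (sub_nonneg.2 ht.2) h.1
    have h2 := mul_nonneg ht.1 h.2
    linarith
  obtain ⟨t, ht, ⟨x, hxV, hx1, hx2⟩, ⟨y, hyV, hy1, hy2⟩⟩ :=
    isPreconnected_Icc _ _ hU hW (by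
      intro t ht
      obtain ⟨x, hx, hx'⟩ := hcon t ht
      rcases key t ht x hx' with h | h
      · exact Or.inl ⟨x, hx, hx', h⟩
      · exact Or.inr ⟨x, hx, hx', h⟩)
      (by
        obtain ⟨x, hx, hx'⟩ := hcon 0 (by simp)
        exact ⟨0, by simp, x, hx, hx', by simpa using hx'⟩)
      (by
        obtain ⟨x, hx, hx'⟩ := hcon 1 (by simp)
        exact ⟨1, by simp, x, hx, hx', by simpa using hx'⟩)
  -- choose the sign of y
  obtain ⟨y, hyV, hy1, hy2, hxy⟩ : ∃ y ∈ V, (1 - t) * A y y + t * B y y < 0 ∧ B y y < 0 ∧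
      (1 - t) * (A x y + A y x) + t * (B x y + B y x) ≤ 0 := by
    rcases le_total ((1 - t) * (A x y + A y x) + t * (B x y + B y x)) 0 with h | h
    · exact ⟨y, hyV, hy1, hy2, h⟩
    · refine ⟨-y, V.neg_mem hyV, by simpa using hy1, by simpa using hy2, ?_⟩
      simp
      linarith
  have hcA : IsOpen {s : ℝ | A ((1 - s) • x + s • y) ((1 - s) • x + s • y) < 0} :=
    isOpen_lt (by fun_prop) continuous_const
  have hcB : IsOpen {s : ℝ | B ((1 - s) • x + s • y) ((1 - s) • x + s • y) < 0} :=
    isOpen_lt (by fun_prop) continuous_const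
  obtain ⟨s, hs, hs1, hs2⟩ := isPreconnected_Icc (a := (0:ℝ)) (b := 1) _ _ hcA hcB (by
      intro s hs
      apply key t ht
      have h0 : 0 ≤ 1 - s := sub_nonneg.2 hs.2
      have e : ∀ C : E →L[ℝ] E →L[ℝ] ℝ, C ((1 - s) • x + s • y) ((1 - s) • x + s • y) =
        (1-s)^2 * C x x + s * (1-s) * (C x y + C y x) + s^2 * C y y := by
        intro C; simp; ring
      rw [e, e]
      have h3 := mul_nonneg hs.1 h0
      have h4 := mul_nonpos_of_nonneg_of_nonpos h3 hxy
      have h5 : (1-s)^2 * ((1 - t) * A x x + t * B x x) + s^2 * ((1 - t) * A y y + t * B y y) < 0 := by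
        rcases hs.1.eq_or_lt with h | h
        · subst h; simpa using hx1
        · have a1 := mul_neg_of_pos_of_neg (pow_pos h 2) hy1
          have a2 := mul_nonpos_of_nonneg_of_nonpos (sq_nonneg (1-s)) hx1.le
          linarith
      nlinarith)
    ⟨0, by simp, by simpa using hx2⟩ ⟨1, by simp, by simpa using hy2⟩
  rcases H _ (V.add_mem (V.smul_mem (1-s) hxV) (V.smul_mem s hyV)) with h | h
  · exact absurd hs1 (not_lt.2 h)
  · exact absurd hs2 (not_lt.2 h)

theorem aux_surj {n m : ℕ} (hl : Fin m → ((Fin n → ℝ) →L[ℝ] ℝ)) (hli : LinearIndependent ℝ hl) :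
    (ContinuousLinearMap.pi hl).range = ⊤ := by
  by_contra hne
  obtain ⟨φ, hφ, hle⟩ := Submodule.exists_le_ker_of_lt_top _ (lt_top_iff_ne_top.2 hne)
  have h0 : ∑ i, φ (Pi.single i 1) • hl i = 0 := by
    ext z
    have h1 : φ (fun i => hl i z) = 0 := hle (⟨z, rfl⟩)
    rw [LinearMap.pi_apply_eq_sum_univ] at h1
    simp only [_root_.sum_apply, _root_.smul_apply, smul_eq_mul, _root_.zero_apply]
    rw [← h1]
    refine Finset.sum_congr rfl fun i _ => ?_
    rw [smul_eq_mul, mul_comm]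
    congr 2
    ext j; simp [Pi.single_apply, eq_comm]
  have h2 := Fintype.linearIndependent_iff.1 hli _ h0
  apply hφ
  ext i
  simpa using h2 i

theorem aux_lin_zero {L c : ℝ} (H : ∀ r : ℝ, 0 < r * L + c) : L = 0 := by
  by_contra h
  have := H (-(c) / L)
  rw [div_mul_cancel₀ _ h] at this
  linarith

theorem aux_lin_nonneg {L c : ℝ} (H : ∀ r : ℝ, 0 < r → 0 < r * L + c) : 0 ≤ L := by
  by_contra h
  push Not at h
  have h1 := H ((|c| + 1) / (-L)) (by apply div_pos; positivity; linarith)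
  have h2 : (|c| + 1) / (-L) * L = -(|c| + 1) := by
    rw [div_neg, neg_mul, div_mul_cancel₀ _ h.ne]
  have := le_abs_self c
  linarith

theorem aux_motzkin {n m p : ℕ} (a : (Fin n → ℝ) →L[ℝ] ℝ) (hl : Fin m → ((Fin n → ℝ) →L[ℝ] ℝ))
    (b : Fin p → ((Fin n → ℝ) →L[ℝ] ℝ)) (hli : LinearIndependent ℝ hl)
    (q0 : ℝ) (qh : Fin m → ℝ) (q : Fin p → ℝ)
    (H : ∀ z, (∀ i, hl i z + qh i = 0) → (∀ j, b j z + q j < 0) → 0 ≤ a z + q0) :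
    ∃ (α : ℝ) (lam : Fin m → ℝ) (mu : Fin p → ℝ), 0 ≤ α ∧ (∀ j, 0 ≤ mu j) ∧
      (∀ z, α * a z + ∑ i, lam i * hl i z + ∑ j, mu j * b j z = 0) ∧
      (∀ s0 : ℝ, ∀ s : Fin p → ℝ, q0 < s0 → (∀ j, q j < s j) →
        0 < α * s0 + ∑ i, lam i * qh i + ∑ j, mu j * s j) ∧
      0 ≤ α * q0 + ∑ i, lam i * qh i + ∑ j, mu j * q j := by
  let T : ((Fin n → ℝ) × ℝ × (Fin p → ℝ)) →L[ℝ] (ℝ × (Fin m → ℝ) × (Fin p → ℝ)) :=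
    ((a.comp (.fst ℝ _ _)) + ((ContinuousLinearMap.fst ℝ _ _).comp (.snd ℝ _ _))).prod
      (((ContinuousLinearMap.pi hl).comp (.fst ℝ _ _)).prod
        (((ContinuousLinearMap.pi b).comp (.fst ℝ _ _)) +
          ((ContinuousLinearMap.snd ℝ _ _).comp (.snd ℝ _ _))))
  have hT : ∀ z s0 s, T (z, s0, s) = (a z + s0, (fun i => hl i z), (fun j => b j z + s j)) := by
    intro z s0 s; rfl
  have hTs : Function.Surjective T := by
    rintro ⟨u, v, w⟩
    obtain ⟨z, hz⟩ := LinearMap.range_eq_top.1 (aux_surj hl hli) v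
    refine ⟨(z, u - a z, fun j => w j - b j z), ?_⟩
    rw [hT, ← hz]
    simp
    rfl
  let D : Set ((Fin n → ℝ) × ℝ × (Fin p → ℝ)) :=
    {y | q0 < y.2.1} ∩ ⋂ j, {y | q j < y.2.2 j}
  have hDo : IsOpen D := by
    refine (isOpen_lt continuous_const (by fun_prop)).inter ?_
    exact isOpen_iInter_of_finite fun j => isOpen_lt continuous_const (by fun_prop)
  have hDc : Convex ℝ D := by
    refine Convex.inter ?_ (convex_iInter fun j => ?_)
    · exact convex_halfSpace_gt ⟨fun _ _ => rfl, fun _ _ => rfl⟩ _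
    · exact convex_halfSpace_gt (f := fun y : ((Fin n → ℝ) × ℝ × (Fin p → ℝ)) => y.2.2 j)
        ⟨fun _ _ => rfl, fun _ _ => rfl⟩ _
  have hno : ((0 : ℝ), -qh, (0 : Fin p → ℝ)) ∉ Set.image T D := by
    rintro ⟨⟨z, s0, s⟩, hD, he⟩
    rw [hT] at he
    simp only [Prod.mk.injEq] at he
    obtain ⟨e1, e2, e3⟩ := he
    have := H z (fun i => by have := congrFun e2 i; simp at this; linarith) (fun j => by
      have := congrFun e3 j
      have h2 : q j < s j := Set.mem_iInter.1 hD.2 j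
      simp at this; linarith)
    have h1 : q0 < s0 := hD.1
    linarith
  obtain ⟨l, hlp⟩ := geometric_hahn_banach_point_open (hDc.linear_image T.toLinearMap)
    (T.isOpenMap hTs _ hDo) hno
  have hdec : ∀ u v w, l (u, v, w) = l (1, 0, 0) * u + ∑ i, l (0, Pi.single i 1, 0) * v i
      + ∑ j, l (0, 0, Pi.single j 1) * w j := by
    intro u v w
    have e : (u, v, w) = u • ((1:ℝ), (0 : Fin m → ℝ), (0 : Fin p → ℝ)) +
        ∑ i, v i • ((0:ℝ), (Pi.single i 1 : Fin m → ℝ), (0 : Fin p → ℝ)) +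
        ∑ j, w j • ((0:ℝ), (0 : Fin m → ℝ), (Pi.single j 1 : Fin p → ℝ)) := by
      refine Prod.ext ?_ (Prod.ext ?_ ?_)
      · simp [Prod.fst_sum]
      · ext k; simp [Prod.snd_sum, Prod.fst_sum, Finset.sum_apply, Pi.single_apply]
      · ext k; simp [Prod.snd_sum, Prod.fst_sum, Finset.sum_apply, Pi.single_apply]
    rw [e, map_add, map_add, map_sum, map_sum, map_smul]
    simp only [map_smul, smul_eq_mul, mul_comm]
  set α := l (1, 0, 0) with hα
  set lam : Fin m → ℝ := fun i => l (0, Pi.single i 1, 0) with hlam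
  set mu : Fin p → ℝ := fun j => l (0, 0, Pi.single j 1) with hmu
  have hdec' : ∀ u v w, l (u, v, w) = α * u + ∑ i, lam i * v i + ∑ j, mu j * w j := hdec
  have main : ∀ (z : Fin n → ℝ) (s0 : ℝ) (s : Fin p → ℝ), q0 < s0 → (∀ j, q j < s j) →
      0 < (α * a z + ∑ i, lam i * hl i z + ∑ j, mu j * b j z) +
        (α * s0 + ∑ i, lam i * qh i + ∑ j, mu j * s j) := by
    intro z s0 s h0 hs
    have := hlp _ ⟨(z, s0, s), ⟨h0, Set.mem_iInter.2 hs⟩, rfl⟩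
    have e : T.toLinearMap (z, s0, s) = T (z, s0, s) := rfl
    rw [e, hT, hdec', hdec'] at this
    simp only [Pi.neg_apply, mul_neg, Finset.sum_neg_distrib, mul_add, Finset.sum_add_distrib,
      Pi.zero_apply, mul_zero, Finset.sum_const_zero] at this
    linarith
  have hL : ∀ z, α * a z + ∑ i, lam i * hl i z + ∑ j, mu j * b j z = 0 := by
    intro z
    refine aux_lin_zero (c := α * (q0+1) + ∑ i, lam i * qh i + ∑ j, mu j * (q j + 1)) fun r => ?_
    have := main (r • z) (q0 + 1) (fun j => q j + 1) (by linarith) (fun j => by linarith)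
    simp only [map_smul, smul_eq_mul, mul_left_comm _ r, ← Finset.mul_sum, ← mul_add] at this
    simpa only [← mul_add] using this
  have hS : ∀ s0 : ℝ, ∀ s : Fin p → ℝ, q0 < s0 → (∀ j, q j < s j) →
        0 < α * s0 + ∑ i, lam i * qh i + ∑ j, mu j * s j := by
    intro s0 s h0 hs
    have := main 0 s0 s h0 hs
    rwa [hL, zero_add] at this
  refine ⟨α, lam, mu, ?_, ?_, hL, hS, ?_⟩
  · refine aux_lin_nonneg (c := α * q0 + ∑ i, lam i * qh i + ∑ j, mu j * (q j + 1)) fun r hr => ?_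
    have := hS (q0 + r) (fun j => q j + 1) (by linarith) (fun j => by linarith)
    linarith
  · intro k
    refine aux_lin_nonneg
      (c := α * (q0 + 1) + ∑ i, lam i * qh i + ∑ j, mu j * (q j + 1)) fun r hr => ?_
    have := hS (q0 + 1) (fun j => q j + 1 + r * (Pi.single k 1 : Fin p → ℝ) j) (by linarith)
      (fun j => by
        have : 0 ≤ r * (Pi.single k 1 : Fin p → ℝ) j := by
          apply mul_nonneg hr.le
          by_cases h : j = k <;> simp [Pi.single_apply, h]
        linarith)
    have e : ∑ j, mu j * (q j + 1 + r * (Pi.single k 1 : Fin p → ℝ) j) =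
      ∑ j, mu j * (q j + 1) + r * mu k := by
      rw [Finset.sum_congr rfl fun j _ => mul_add _ _ _, Finset.sum_add_distrib]
      congr 1
      simp [Pi.single_apply, mul_comm]
    rw [e] at this
    linarith
  · by_contra hneg
    push Not at hneg
    have hh : ∀ ε : ℝ, 0 < ε → 0 < (α * q0 + ∑ i, lam i * qh i + ∑ j, mu j * q j)
        + ε * (α + ∑ j, mu j) := by
      intro ε hε
      have := hS (q0 + ε) (fun j => q j + ε) (by linarith) (fun j => by linarith)
      simp only [mul_add, Finset.sum_add_distrib, ← Finset.sum_mul] at this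
      linarith
    set X := α * q0 + ∑ i, lam i * qh i + ∑ j, mu j * q j
    set Y := α + ∑ j, mu j
    have hd : 0 < |Y| + 1 := by positivity
    have h1 := hh (-X / (|Y| + 1)) (div_pos (by linarith) hd)
    have h2 : -X / (|Y| + 1) * Y ≤ -X := by
      rw [div_mul_eq_mul_div, div_le_iff₀ hd]
      have := le_abs_self Y
      nlinarith
    linarith

theorem aux_taylor {E : Type*} [NormedAddCommGroup E] [NormedSpace ℝ E] {φ : E → ℝ}
    (hφ : ContDiff ℝ 2 φ) (x : E) :
    (fun v => φ (x + v) - φ x - fderiv ℝ φ x v - (1/2) * fderiv ℝ (fderiv ℝ φ) x v v)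
      =o[𝓝 0] (fun v => ‖v‖ ^ 2) := by
  have hd : Differentiable ℝ φ := hφ.differentiable (by norm_num)
  have hd2 : Differentiable ℝ (fderiv ℝ φ) :=
    (hφ.fderiv_right (m := 1) (by norm_num)).differentiable (by norm_num)
  have hsym : IsSymmSndFDerivAt ℝ φ x := hφ.contDiffAt.isSymmSndFDerivAt (by simp)
  set B := fderiv ℝ (fderiv ℝ φ) x with hB
  have hder : ∀ v, HasFDerivAt (fun v => φ (x + v) - φ x - fderiv ℝ φ x v - (1/2) * B v v)
      (fderiv ℝ φ (x + v) - fderiv ℝ φ x - B v) v := by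
    intro v
    have h1 : HasFDerivAt (fun v => φ (x + v)) (fderiv ℝ φ (x + v)) v := by
      exact HasFDerivAt.comp (f := fun v => x + v) v (hd (x + v)).hasFDerivAt
        ((hasFDerivAt_id v).const_add x)
    have h2 : HasFDerivAt (fun v => B v v) (B v + B.flip v) v := by
      exact (B.hasFDerivAt (x := v)).clm_apply (hasFDerivAt_id v)
    have h3 := ((h1.sub_const (φ x)).sub ((fderiv ℝ φ x).hasFDerivAt)).sub (h2.const_mul (1/2))
    refine h3.congr_fderiv ?_
    ext w
    have : B w v = B v w := hsym.eq w v
    simp [this]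
    ring
  have hlit : (fun v => fderiv ℝ φ (x + v) - fderiv ℝ φ x - B v) =o[𝓝 0] (fun v => v) :=
    hasFDerivAt_iff_isLittleO_nhds_zero.1 (hd2 x).hasFDerivAt
  rw [isLittleO_iff]
  intro c hc
  obtain ⟨δ, hδ, hb⟩ := Metric.eventually_nhds_iff_ball.1 (isLittleO_iff.1 hlit hc)
  filter_upwards [Metric.ball_mem_nhds (0:E) hδ] with v hv
  have := (convex_closedBall (0:E) ‖v‖).norm_image_sub_le_of_norm_hasFDerivWithin_le
    (f := fun v => φ (x + v) - φ x - fderiv ℝ φ x v - (1/2) * B v v) (C := c * ‖v‖)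
    (fun y _ => (hder y).hasFDerivWithinAt) (fun y hy => by
      have hy' : ‖y‖ ≤ ‖v‖ := by simpa using hy
      refine (hb y ?_).trans (by gcongr)
      simp at hv ⊢; linarith) (x := 0) (y := v) (by simp) (by simp)
  simp only [add_zero, sub_self, map_zero, mul_zero, sub_zero, zero_sub, neg_zero] at this
  rw [norm_pow, norm_norm, pow_two, ← mul_assoc]
  exact this

theorem aux_curve {E : Type*} [NormedAddCommGroup E] [NormedSpace ℝ E] {φ : E → ℝ}
    (hφ : ContDiff ℝ 2 φ) (x d z : E) (c : ℝ → E)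
    (hc : c =o[𝓝[>] 0] (fun t : ℝ => t ^ 2)) :
    (fun t : ℝ => φ (x + t • d + (t^2/2) • z + c t) - φ x - t * fderiv ℝ φ x d
      - (t^2/2) * (fderiv ℝ φ x z + fderiv ℝ (fderiv ℝ φ) x d d)) =o[𝓝[>] 0]
      (fun t : ℝ => t ^ 2) := by
  set l : Filter ℝ := 𝓝[>] 0
  set B := fderiv ℝ (fderiv ℝ φ) x with hB
  have htid : Tendsto (fun t : ℝ => t) l (𝓝 0) := nhdsWithin_le_nhds
  have ht2 : (fun t : ℝ => t ^ 2) =o[l] (fun t : ℝ => t) := by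
    have : (fun t : ℝ => t ^ 2) =o[𝓝 0] (fun t : ℝ => t ^ 1) := isLittleO_pow_pow (by norm_num)
    simpa using this.mono (nhdsWithin_le_nhds)
  set w : ℝ → E := fun t => (t^2/2) • z + c t with hw
  have hwO : w =O[l] (fun t : ℝ => t ^ 2) := by
    refine IsBigO.add ?_ hc.isBigO
    refine IsBigO.of_bound (‖z‖) (Eventually.of_forall fun t => ?_)
    rw [norm_smul, norm_div, mul_comm]
    gcongr
    simp
    have := sq_nonneg t
    linarith
  set v : ℝ → E := fun t => t • d + w t with hv
  have hdO : (fun t : ℝ => t • d) =O[l] (fun t : ℝ => t) := by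
    refine IsBigO.of_bound (‖d‖) (Eventually.of_forall fun t => ?_)
    rw [norm_smul, mul_comm]
  have hvO : v =O[l] (fun t : ℝ => t) := hdO.add (hwO.trans ht2.isBigO)
  have hv0 : Tendsto v l (𝓝 0) := hvO.trans_tendsto htid
  have h1 := (aux_taylor hφ x).comp_tendsto hv0
  have h1' : (fun t => φ (x + v t) - φ x - fderiv ℝ φ x (v t) - (1/2) * B (v t) (v t))
      =o[l] (fun t : ℝ => t ^ 2) := by
    refine h1.trans_isBigO ?_
    exact (hvO.norm_left).pow 2
  have h2 : (fun t => fderiv ℝ φ x (c t)) =o[l] (fun t : ℝ => t ^ 2) :=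
    ((fderiv ℝ φ x).isBigO_comp c l).trans_isLittleO hc
  have hbil : ∀ a b : ℝ → E, (fun t => B (a t) (b t)) =O[l] fun t => ‖a t‖ * ‖b t‖ := by
    intro a b
    refine IsBigO.of_bound ‖B‖ (Eventually.of_forall fun t => ?_)
    rw [norm_mul, norm_norm, norm_norm, ← mul_assoc]
    exact B.le_opNorm₂ _ _
  have hlit : (fun t : ℝ => t ^ 2 * t) =o[l] (fun t : ℝ => t ^ 2) := by
    simpa using (isBigO_refl (fun t : ℝ => t ^ 2) l).mul_isLittleO
      ((isLittleO_one_iff ℝ).2 htid)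
  have h3 : (fun t => B (w t) (v t)) =o[l] (fun t : ℝ => t ^ 2) :=
    ((hbil w v).trans (hwO.norm_left.mul hvO.norm_left)).trans_isLittleO hlit
  have h4 : (fun t => B (t • d) (w t)) =o[l] (fun t : ℝ => t ^ 2) := by
    refine ((hbil _ w).trans (hdO.norm_left.mul hwO.norm_left)).trans_isLittleO ?_
    simpa only [mul_comm] using hlit
  have h5 := (h1'.add h2).add ((h3.add h4).const_mul_left (1/2))
  refine h5.congr' (Eventually.of_forall fun t => ?_) EventuallyEq.rfl
  have e1 : x + t • d + (t^2/2) • z + c t = x + v t := by simp [hv, hw]; abel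
  beta_reduce
  rw [e1]
  simp only [hv, hw, map_add, map_smul, _root_.add_apply, _root_.smul_apply,
    smul_eq_mul]
  ring

theorem aux_correct {n m : ℕ} (h : Fin m → (Fin n → ℝ) → ℝ) (hh : ∀ i, ContDiff ℝ 2 (h i))
    (xs : Fin n → ℝ) (hs : (ContinuousLinearMap.pi fun i => fderiv ℝ (h i) xs).range = ⊤)
    (h0 : ∀ i, h i xs = 0) (y : ℝ → (Fin n → ℝ)) (l : Filter ℝ) [l.NeBot] (hy : Tendsto y l (𝓝 xs)) :
    ∃ (C : ℝ) (c : ℝ → (Fin n → ℝ)), ∀ᶠ t in l, (∀ i, h i (y t + c t) = 0) ∧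
      ‖c t‖ ≤ C * ‖fun i => h i (y t)‖ := by
  set F : (Fin n → ℝ) → (Fin m → ℝ) := fun x i => h i x with hF
  set F' := ContinuousLinearMap.pi fun i => fderiv ℝ (h i) xs with hF'
  have hst : HasStrictFDerivAt F F' xs :=
    hasStrictFDerivAt_pi'.2 fun i => by
      exact (hh i).contDiffAt.hasStrictFDerivAt (by norm_num)
  let R := F'.nonlinearRightInverseOfSurjective hs
  have hRpos : 0 < R.nnnorm := F'.nonlinearRightInverseOfSurjective_nnnorm_pos hs
  set c0 : NNReal := R.nnnorm⁻¹ / 2 with hc0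
  have hc0pos : 0 < c0 := by positivity
  obtain ⟨s, hsn, happ⟩ := hst.approximates_deriv_on_nhds (c := c0) (Or.inr hc0pos)
  obtain ⟨δ, hδ, hball⟩ := Metric.nhds_basis_closedBall.mem_iff.1 hsn
  have hc : ((R.nnnorm : ℝ)⁻¹ - c0) = c0 := by
    rw [hc0]; push_cast; ring
  have hFc : Tendsto (fun t => ‖F (y t)‖) l (𝓝 0) := by
    have h1 : F xs = 0 := by ext i; exact h0 i
    have := (hst.continuousAt.tendsto.comp hy).norm
    rw [h1, norm_zero] at this
    exact this
  have hr : Tendsto (fun t => (c0:ℝ)⁻¹ * ‖F (y t)‖ + dist (y t) xs) l (𝓝 0) := by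
    have := (hFc.const_mul ((c0:ℝ)⁻¹)).add (tendsto_iff_dist_tendsto_zero.1 hy)
    simpa using this
  have hex : ∀ᶠ t in l, ∃ e : Fin n → ℝ, (∀ i, h i (y t + e) = 0) ∧
      ‖e‖ ≤ (c0:ℝ)⁻¹ * ‖F (y t)‖ := by
    filter_upwards [hr.eventually_lt_const hδ] with t ht
    have hsurj := happ.surjOn_closedBall_of_nonlinearRightInverse R
      (ε := (c0:ℝ)⁻¹ * ‖F (y t)‖) (b := y t) (by positivity)
      ((Metric.closedBall_subset_closedBall' ht.le).trans hball)
    rw [hc, mul_inv_cancel_left₀ (by positivity)] at hsurj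
    obtain ⟨x, hx, hx0⟩ := hsurj (a := 0) (by simp)
    refine ⟨x - y t, fun i => ?_, ?_⟩
    · rw [add_sub_cancel]; exact congrFun hx0 i
    · rw [← dist_eq_norm]; exact hx
  obtain ⟨c, hc⟩ := hex.choice
  exact ⟨_, c, hc⟩

theorem aux_sign {ψ : ℝ → ℝ} {A a b : ℝ}
    (hψ : (fun t : ℝ => ψ t - A - t * a - (t^2/2) * b) =o[𝓝[>] 0] (fun t : ℝ => t ^ 2))
    (hs : A < 0 ∨ (A = 0 ∧ (a < 0 ∨ (a = 0 ∧ b < 0)))) : ∀ᶠ t in 𝓝[>] (0:ℝ), ψ t < 0 := by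
  rcases hs with hA | ⟨rfl, ha | ⟨rfl, hb⟩⟩
  · have h1 : Tendsto (fun t : ℝ => A + t * a + (t^2/2) * b + t^2) (𝓝[>] 0) (𝓝 A) := by
      have : Continuous (fun t : ℝ => A + t * a + (t^2/2) * b + t^2) := by fun_prop
      have := this.tendsto 0
      simp at this
      exact this.mono_left nhdsWithin_le_nhds
    filter_upwards [h1.eventually_lt_const hA, isLittleO_iff.1 hψ one_pos] with t h1 h2
    rw [Real.norm_eq_abs, Real.norm_eq_abs, abs_of_nonneg (sq_nonneg t)] at h2
    have := (abs_le.1 h2).2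
    linarith
  · have h1 : Tendsto (fun t : ℝ => a + (t/2) * b + t) (𝓝[>] 0) (𝓝 a) := by
      have : Continuous (fun t : ℝ => a + (t/2) * b + t) := by fun_prop
      have := this.tendsto 0
      simp at this
      exact this.mono_left nhdsWithin_le_nhds
    filter_upwards [h1.eventually_lt_const ha, isLittleO_iff.1 hψ one_pos,
      self_mem_nhdsWithin] with t h1 h2 ht
    rw [Real.norm_eq_abs, Real.norm_eq_abs, abs_of_nonneg (sq_nonneg t)] at h2
    have := (abs_le.1 h2).2
    have h3 := mul_neg_of_pos_of_neg (show 0 < t from ht) h1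
    nlinarith
  · have hb4 : 0 < -b / 4 := by linarith
    filter_upwards [isLittleO_iff.1 hψ hb4, self_mem_nhdsWithin] with t h2 ht
    rw [Real.norm_eq_abs, Real.norm_eq_abs, abs_of_nonneg (sq_nonneg t)] at h2
    have := (abs_le.1 h2).2
    have h3 := mul_neg_of_pos_of_neg (pow_pos (show 0 < t from ht) 2) hb
    linarith

theorem aux_primal {n m p : ℕ} (f : (Fin n → ℝ) → ℝ) (h : Fin m → (Fin n → ℝ) → ℝ)
    (g : Fin p → (Fin n → ℝ) → ℝ)
    (hf : ContDiff ℝ 2 f) (hh : ∀ i, ContDiff ℝ 2 (h i)) (hg : ∀ j, ContDiff ℝ 2 (g j))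
    (xs : Fin n → ℝ) (hfeas : Feas h g xs)
    (hmin : IsLocalMinOn f {x | Feas h g x} xs)
    (hli : LinearIndependent ℝ (fun i : Fin m => fderiv ℝ (h i) xs))
    (d : Fin n → ℝ) (hd : critCone f h g xs d) (z : Fin n → ℝ)
    (hzh : ∀ i, fderiv ℝ (h i) xs z + fderiv ℝ (fderiv ℝ (h i)) xs d d = 0)
    (hzg : ∀ j, g j xs = 0 → fderiv ℝ (g j) xs d = 0 →
      fderiv ℝ (g j) xs z + fderiv ℝ (fderiv ℝ (g j)) xs d d < 0) :
    0 ≤ fderiv ℝ f xs z + fderiv ℝ (fderiv ℝ f) xs d d := by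
  by_contra hneg
  push Not at hneg
  obtain ⟨hd1, hd2, hd3⟩ := hd
  set y : ℝ → (Fin n → ℝ) := fun t => xs + t • d + (t^2/2) • z with hy
  have hyt : Tendsto y (𝓝[>] 0) (𝓝 xs) := by
    have : Continuous y := by fun_prop
    have := this.tendsto 0
    simp [hy] at this
    exact this.mono_left nhdsWithin_le_nhds
  obtain ⟨C, c, hc⟩ := aux_correct h hh xs (aux_surj _ hli) hfeas.1 y _ hyt
  have hHo : (fun t => fun i => h i (y t)) =o[𝓝[>] 0] (fun t : ℝ => t ^ 2) := by
    rw [isLittleO_pi]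
    intro i
    have := aux_curve (hh i) xs d z (fun _ => 0) (isLittleO_zero _ _)
    simpa [hfeas.1 i, hd2 i, hzh i] using this
  have hco : c =o[𝓝[>] 0] (fun t : ℝ => t ^ 2) := by
    refine IsBigO.trans_isLittleO (IsBigO.of_bound C ?_) hHo
    filter_upwards [hc] with t ht using ht.2
  have hxt : Tendsto (fun t => y t + c t) (𝓝[>] 0) (𝓝 xs) := by
    have h1 : Tendsto (fun t : ℝ => t ^ 2) (𝓝[>] 0) (𝓝 0) := by
      have := (continuous_pow (M := ℝ) 2).tendsto 0
      simp at this
      exact this.mono_left nhdsWithin_le_nhds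
    simpa using hyt.add (hco.isBigO.trans_tendsto h1)
  have hgl : ∀ᶠ t in 𝓝[>] (0:ℝ), ∀ j, g j (y t + c t) < 0 := by
    rw [eventually_all]
    intro j
    refine aux_sign (aux_curve (hg j) xs d z c hco) ?_
    rcases (hfeas.2 j).lt_or_eq with h1 | h1
    · exact Or.inl h1
    · refine Or.inr ⟨h1, ?_⟩
      rcases (hd3 j h1).lt_or_eq with h2 | h2
      · exact Or.inl h2
      · exact Or.inr ⟨h2, hzg j h1 h2⟩
  have hfl : ∀ᶠ t in 𝓝[>] (0:ℝ), f (y t + c t) - f xs < 0 := by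
    refine aux_sign (A := 0) (a := 0) (b := _) ?_ (Or.inr ⟨rfl, Or.inr ⟨rfl, hneg⟩⟩)
    have := aux_curve hf xs d z c hco
    simpa [hd1] using this
  have hm := hxt.eventually (eventually_nhdsWithin_iff.1 hmin)
  obtain ⟨t, h1, h2, h3, h4⟩ := (hgl.and (hfl.and (hm.and hc))).exists
  have := h3 ⟨h4.1, fun j => (h1 j).le⟩
  linarith

theorem aux_fderiv_Lagr {n m p : ℕ} (f : (Fin n → ℝ) → ℝ) (h : Fin m → (Fin n → ℝ) → ℝ)
    (g : Fin p → (Fin n → ℝ) → ℝ)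
    (hf : ContDiff ℝ 2 f) (hh : ∀ i, ContDiff ℝ 2 (h i)) (hg : ∀ j, ContDiff ℝ 2 (g j))
    (lam : Fin m → ℝ) (mu : Fin p → ℝ) (x : Fin n → ℝ) :
    fderiv ℝ (Lagr f h g lam mu) x =
      fderiv ℝ f x + ∑ i, lam i • fderiv ℝ (h i) x + ∑ j, mu j • fderiv ℝ (g j) x := by
  have D : ∀ {φ : (Fin n → ℝ) → ℝ}, ContDiff ℝ 2 φ → HasFDerivAt φ (fderiv ℝ φ x) x :=
    fun hφ => (hφ.differentiable (by norm_num) x).hasFDerivAt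
  refine HasFDerivAt.fderiv ?_
  exact ((D hf).add (HasFDerivAt.fun_sum fun i _ => (D (hh i)).const_mul (lam i))).add
    (HasFDerivAt.fun_sum fun j _ => (D (hg j)).const_mul (mu j))

/-- the Hessian bilinear form of the Lagrangian -/
def auxHess {n m p : ℕ} (f : (Fin n → ℝ) → ℝ) (h : Fin m → (Fin n → ℝ) → ℝ)
    (g : Fin p → (Fin n → ℝ) → ℝ) (lam : Fin m → ℝ) (mu : Fin p → ℝ) (x : Fin n → ℝ) :
    (Fin n → ℝ) →L[ℝ] (Fin n → ℝ) →L[ℝ] ℝ :=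
  fderiv ℝ (fderiv ℝ f) x + ∑ i, lam i • fderiv ℝ (fderiv ℝ (h i)) x +
    ∑ j, mu j • fderiv ℝ (fderiv ℝ (g j)) x

theorem auxHess_apply {n m p : ℕ} (f : (Fin n → ℝ) → ℝ) (h : Fin m → (Fin n → ℝ) → ℝ)
    (g : Fin p → (Fin n → ℝ) → ℝ) (lam : Fin m → ℝ) (mu : Fin p → ℝ) (x d : Fin n → ℝ) :
    auxHess f h g lam mu x d d = fderiv ℝ (fderiv ℝ f) x d d +
      ∑ i, lam i * fderiv ℝ (fderiv ℝ (h i)) x d d +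
      ∑ j, mu j * fderiv ℝ (fderiv ℝ (g j)) x d d := by
  simp [auxHess, _root_.sum_apply]

theorem aux_hessQ {n m p : ℕ} (f : (Fin n → ℝ) → ℝ) (h : Fin m → (Fin n → ℝ) → ℝ)
    (g : Fin p → (Fin n → ℝ) → ℝ)
    (hf : ContDiff ℝ 2 f) (hh : ∀ i, ContDiff ℝ 2 (h i)) (hg : ∀ j, ContDiff ℝ 2 (g j))
    (lam : Fin m → ℝ) (mu : Fin p → ℝ) (x d : Fin n → ℝ) :
    hessQ (Lagr f h g lam mu) x d = auxHess f h g lam mu x d d := by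
  have D : ∀ {φ : (Fin n → ℝ) → ℝ}, ContDiff ℝ 2 φ →
      HasFDerivAt (fderiv ℝ φ) (fderiv ℝ (fderiv ℝ φ) x) x :=
    fun hφ => ((hφ.fderiv_right (m := 1) (by norm_num)).differentiable (by norm_num) x).hasFDerivAt
  rw [hessQ, iteratedFDeriv_two_apply]
  have e : fderiv ℝ (fderiv ℝ (Lagr f h g lam mu)) x = auxHess f h g lam mu x := by
    rw [funext (aux_fderiv_Lagr f h g hf hh hg lam mu)]
    refine HasFDerivAt.fderiv ?_
    exact ((D hf).add (HasFDerivAt.fun_sum fun i _ => (D (hh i)).const_smul (lam i))).add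
      (HasFDerivAt.fun_sum fun j _ => (D (hg j)).const_smul (mu j))
  rw [e]
  rfl

theorem aux_sonc {n m p : ℕ} (f : (Fin n → ℝ) → ℝ) (h : Fin m → (Fin n → ℝ) → ℝ)
    (g : Fin p → (Fin n → ℝ) → ℝ)
    (hf : ContDiff ℝ 2 f) (hh : ∀ i, ContDiff ℝ 2 (h i)) (hg : ∀ j, ContDiff ℝ 2 (g j))
    (xs : Fin n → ℝ) (hfeas : Feas h g xs)
    (hmin : IsLocalMinOn f {x | Feas h g x} xs)
    (hmfcq : MFCQ h g xs) (d : Fin n → ℝ) (hd : critCone f h g xs d) :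
    ∃ (lam : Fin m → ℝ) (mu : Fin p → ℝ), IsLagMult f h g xs lam mu ∧
      0 ≤ auxHess f h g lam mu xs d d := by
  obtain ⟨hli, e, he1, he2⟩ := hmfcq
  obtain ⟨P, hP⟩ : ∃ P : Fin p → Prop, ∀ j, P j ↔ (g j xs = 0 ∧ fderiv ℝ (g j) xs d = 0) :=
    ⟨_, fun _ => Iff.rfl⟩
  obtain ⟨α, lam, mu, hα, hmu, hL, hS, hQ⟩ := aux_motzkin (fderiv ℝ f xs)
    (fun i => fderiv ℝ (h i) xs) (fun j => if P j then fderiv ℝ (g j) xs else 0) hli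
    (fderiv ℝ (fderiv ℝ f) xs d d) (fun i => fderiv ℝ (fderiv ℝ (h i)) xs d d)
    (fun j => if P j then fderiv ℝ (fderiv ℝ (g j)) xs d d else -1) (by
      intro z hz1 hz2
      refine aux_primal f h g hf hh hg xs hfeas hmin hli d hd z hz1 fun j h1 h2 => ?_
      have := hz2 j
      rwa [if_pos ((hP j).2 ⟨h1, h2⟩), if_pos ((hP j).2 ⟨h1, h2⟩)] at this)
  have hL' : ∀ z, α * fderiv ℝ f xs z + ∑ i, lam i * fderiv ℝ (h i) xs z +
      ∑ j, (if P j then mu j else 0) * fderiv ℝ (g j) xs z = 0 := by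
    intro z
    refine Eq.trans ?_ (hL z)
    congr 1
    refine Finset.sum_congr rfl fun j _ => ?_
    split_ifs <;> simp
  have hα0 : 0 < α := by
    refine hα.lt_of_ne fun h0 => ?_
    have h1 := hL' e
    simp only [← h0, he1, mul_zero, zero_mul, Finset.sum_const_zero, zero_add] at h1
    have hz : ∀ j, (if P j then mu j else 0) = 0 := by
      have hle : ∀ j ∈ Finset.univ, (if P j then mu j else 0) * fderiv ℝ (g j) xs e ≤ 0 := by
        intro j _
        split_ifs with hp
        · exact mul_nonpos_of_nonneg_of_nonpos (hmu j) (he2 j ((hP j).1 hp).1).le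
        · simp
      intro j
      have h2 := (Finset.sum_eq_zero_iff_of_nonpos hle).1 h1 j (Finset.mem_univ _)
      split_ifs with hp
      · rw [if_pos hp] at h2
        exact (mul_eq_zero.1 h2).resolve_right (he2 j ((hP j).1 hp).1).ne
      · rfl
    have hlam : ∀ i, lam i = 0 := by
      refine Fintype.linearIndependent_iff.1 hli lam ?_
      ext z
      have := hL' z
      simp only [← h0, hz, zero_mul, Finset.sum_const_zero, zero_add, add_zero] at this
      simpa [_root_.sum_apply] using this
    have h3 := hS (fderiv ℝ (fderiv ℝ f) xs d d + 1)
      (fun j => if P j then fderiv ℝ (fderiv ℝ (g j)) xs d d + 1 else 0) (by linarith)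
      (fun j => by split_ifs <;> linarith)
    simp only [← h0, hlam, zero_mul, Finset.sum_const_zero, zero_add] at h3
    rw [Finset.sum_eq_zero] at h3
    · exact lt_irrefl _ h3
    · intro j _
      have := hz j
      split_ifs with hp
      · rw [if_pos hp] at this; simp [this]
      · simp
  refine ⟨fun i => α⁻¹ * lam i, fun j => α⁻¹ * (if P j then mu j else 0), ⟨?_, ?_, ?_⟩, ?_⟩
  · intro j
    refine mul_nonneg (inv_nonneg.2 hα) ?_
    split_ifs
    · exact hmu j
    · exact le_rfl
  · rw [aux_fderiv_Lagr f h g hf hh hg]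
    ext z
    simp only [_root_.add_apply, _root_.sum_apply, _root_.smul_apply, smul_eq_mul,
      _root_.zero_apply, mul_assoc, ← Finset.mul_sum]
    have := hL' z
    field_simp
    linarith
  · intro j
    by_cases hp : P j
    · simp [((hP j).1 hp).1]
    · simp [hp]
  · rw [auxHess_apply]
    simp only [mul_assoc, ← Finset.mul_sum]
    have h5 : ∑ j, mu j * (if P j then fderiv ℝ (fderiv ℝ (g j)) xs d d else -1) ≤
        ∑ j, (if P j then mu j else 0) * fderiv ℝ (fderiv ℝ (g j)) xs d d := by
      refine Finset.sum_le_sum fun j _ => ?_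
      split_ifs
      · exact le_rfl
      · have := hmu j; linarith
    have h6 : fderiv ℝ (fderiv ℝ f) xs d d =
      α⁻¹ * (α * fderiv ℝ (fderiv ℝ f) xs d d) := by field_simp
    rw [h6, ← mul_add, ← mul_add]
    refine mul_nonneg (inv_nonneg.2 hα) ?_
    linarith


end Helpers

/-- Baccari–Trad: if MFCQ holds at a local minimizer and the multiplier set
is a line segment, then for every first-order cone contained in the critical cone there is
a single Lagrange multiplier whose Hessian quadratic form is nonnegative on the cone. -/
theorem stmt3 {n m p : ℕ} (f : (Fin n → ℝ) → ℝ) (h : Fin m → (Fin n → ℝ) → ℝ)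
    (g : Fin p → (Fin n → ℝ) → ℝ)
    (hf : ContDiff ℝ 2 f) (hh : ∀ i, ContDiff ℝ 2 (h i)) (hg : ∀ j, ContDiff ℝ 2 (g j))
    (xs : Fin n → ℝ) (hfeas : Feas h g xs)
    (hmin : IsLocalMinOn f {x | Feas h g x} xs)
    (hmfcq : MFCQ h g xs)
    (hseg : ∃ a b : (Fin m → ℝ) × (Fin p → ℝ),
      {lm : (Fin m → ℝ) × (Fin p → ℝ) | IsLagMult f h g xs lm.1 lm.2} = segment ℝ a b) :
    ∀ K : Set (Fin n → ℝ), IsFirstOrderCone K → (∀ d ∈ K, critCone f h g xs d) →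
      ∃ (lam : Fin m → ℝ) (mu : Fin p → ℝ), IsLagMult f h g xs lam mu ∧
        ∀ d ∈ K, 0 ≤ hessQ (Lagr f h g lam mu) xs d := by
  rintro K ⟨W, d0, rfl⟩ hK
  obtain ⟨a, b, hab⟩ := hseg
  have hlin : ∀ s t : ℝ, s + t = 1 → ∀ d,
      auxHess f h g (s • a + t • b).1 (s • a + t • b).2 xs d d =
        s * auxHess f h g a.1 a.2 xs d d + t * auxHess f h g b.1 b.2 xs d d := by
    intro s t hst d
    simp only [auxHess_apply, Prod.fst_add, Prod.snd_add, Prod.smul_fst, Prod.smul_snd,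
      Pi.add_apply, Pi.smul_apply, smul_eq_mul, add_mul, mul_assoc, Finset.sum_add_distrib,
      ← Finset.mul_sum]
    have : fderiv ℝ (fderiv ℝ f) xs d d = (s + t) * fderiv ℝ (fderiv ℝ f) xs d d := by
      rw [hst, one_mul]
    linear_combination this
  have hmax : ∀ d, critCone f h g xs d →
      0 ≤ auxHess f h g a.1 a.2 xs d d ∨ 0 ≤ auxHess f h g b.1 b.2 xs d d := by
    intro d hd
    obtain ⟨lam, mu, hm, hq⟩ := aux_sonc f h g hf hh hg xs hfeas hmin hmfcq d hd
    have hmem : (lam, mu) ∈ segment ℝ a b := by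
      rw [← hab]; exact hm
    obtain ⟨s, t, hs, ht, hst, he⟩ := hmem
    have h1 := hlin s t hst d
    rw [he] at h1
    by_contra hcon
    push Not at hcon
    have h2 := mul_nonpos_of_nonneg_of_nonpos hs hcon.1.le
    have h3 := mul_nonpos_of_nonneg_of_nonpos ht hcon.2.le
    rcases hs.eq_or_lt with h4 | h4
    · have h5 : 0 < t := by linarith
      have := mul_neg_of_pos_of_neg h5 hcon.2
      simp only at h1
      linarith
    · have := mul_neg_of_pos_of_neg h4 hcon.1
      simp only at h1
      linarith
  obtain ⟨t, ht, hpos⟩ := aux_yuan (W ⊔ Submodule.span ℝ {d0}) (auxHess f h g a.1 a.2 xs)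
    (auxHess f h g b.1 b.2 xs) (by
      intro x hx
      obtain ⟨w, hw, v, hv, rfl⟩ := Submodule.mem_sup.1 hx
      obtain ⟨r, rfl⟩ := Submodule.mem_span_singleton.1 hv
      rcases le_total 0 r with hr | hr
      · exact hmax _ (hK _ ⟨w, hw, r, hr, rfl⟩)
      · have := hmax (-(w + r • d0)) (hK _ ⟨-w, W.neg_mem hw, -r, by linarith, by
          rw [neg_add, neg_smul]⟩)
        simpa only [map_neg, _root_.neg_apply, neg_neg] using this)
  have hst : (1 - t) + t = 1 := by ring
  have hmem : (1 - t) • a + t • b ∈ segment ℝ a b :=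
    ⟨1 - t, t, sub_nonneg.2 ht.2, ht.1, hst, rfl⟩
  rw [← hab] at hmem
  refine ⟨_, _, hmem, ?_⟩
  rintro d ⟨w, hw, r, hr, rfl⟩
  rw [aux_hessQ f h g hf hh hg, hlin _ _ hst]
  exact hpos _ (Submodule.add_mem_sup hw (Submodule.smul_mem _ _ (Submodule.mem_span_singleton_self _)))
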